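/- Fix an integer m ≥ 1. Let d_n be the unique positive solution of Σ_{j=1}^∞ j·e^{−jd}/(1 − e^{−jd}) = n and set δ_n = d_n^{4/3}/log n. Then, as n → ∞, the tail integral J₂(m,n) = (e^{n d_n}/(2π))·∫_{δ_n ≤ |θ| ≤ π} g(e^{−d_n + iθ})·F_m(e^{−d_n + iθ})·e^{−iθn} dθ satisfies J₂(m,n) = o(p(n)·n^{(m+1)/2}). -/

import Mathlib

open Filter Asymptotics Topology

/-- `aFun d = Σ_{j≥1} j·e^{−jd}/(1 − e^{−jd})`. -/
noncomputable def aFun (d : ℝ) : ℝ :=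
  ∑' j : ℕ, (j + 1 : ℝ) * Real.exp (-(j + 1) * d) / (1 - Real.exp (-(j + 1) * d))

/-- `gC x = ∏_{j≥1} (1 − x^j)⁻¹` (complex Euler product), for `|x| < 1`. -/
noncomputable def gC (x : ℂ) : ℂ := ∏' j : ℕ, (1 - x ^ (j + 1))⁻¹

/-- `FC m x = Σ_{j≥1} j^m x^j/(1 − x^j)`, for `|x| < 1`. -/
noncomputable def FC (m : ℕ) (x : ℂ) : ℂ :=
  ∑' j : ℕ, (j + 1 : ℂ) ^ m * x ^ (j + 1) / (1 - x ^ (j + 1))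

lemma card_le_count (n k v : ℕ) (hv : 0 < v) (h : k * v ≤ n) :
    Fintype.card (Nat.Partition (n - k * v)) ≤
      (Finset.univ.filter (fun l : Nat.Partition n => k ≤ l.parts.count v)).card := by
  classical
  rw [← Finset.card_univ]
  refine Finset.card_le_card_of_injOn
    (fun l => (⟨l.parts + Multiset.replicate k v, ?_, ?_⟩ : Nat.Partition n)) ?_ ?_
  · intro i hi
    rcases Multiset.mem_add.1 hi with hi | hi
    · exact l.parts_pos hi
    · rw [Multiset.eq_of_mem_replicate hi]; exact hv
  · rw [Multiset.sum_add, l.parts_sum, Multiset.sum_replicate, smul_eq_mul]; omega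
  · intro l _
    simp
  · intro a _ b _ hab
    have := congrArg Nat.Partition.parts hab
    ext1
    simpa using this

lemma sum_count_le (n : ℕ) (l : Nat.Partition n) :
    ∑ v ∈ Finset.range n, (v + 1) * l.parts.count (v + 1) = n := by
  have h := Finset.sum_multiset_count_of_subset l.parts (Finset.range (n + 1)) (by
    intro x hx
    have := Nat.Partition.le_of_mem_parts (Multiset.mem_toFinset.1 hx)
    simp; omega)
  rw [l.parts_sum, Finset.sum_range_succ'] at h
  simp only [smul_eq_mul, mul_zero, add_zero] at h
  conv_rhs => rw [h]
  exact Finset.sum_congr rfl fun _ _ => mul_comm _ _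

def idx (n : ℕ) : Finset (ℕ × ℕ) :=
  (Finset.range n ×ˢ Finset.range n).filter (fun p => (p.1 + 1) * (p.2 + 1) ≤ n)

lemma card_recursion (n : ℕ) :
    ∑ p ∈ idx n, (p.2 + 1) * Fintype.card (Nat.Partition (n - (p.1 + 1) * (p.2 + 1)))
      ≤ n * Fintype.card (Nat.Partition n) := by
  classical
  calc _ ≤ ∑ p ∈ idx n, (p.2 + 1) *
        (Finset.univ.filter (fun l : Nat.Partition n => p.1 + 1 ≤ l.parts.count (p.2 + 1))).card := by
        refine Finset.sum_le_sum fun p hp => Nat.mul_le_mul_left _ ?_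
        exact card_le_count n _ _ (Nat.succ_pos _) (Finset.mem_filter.1 hp).2
    _ ≤ ∑ p ∈ Finset.range n ×ˢ Finset.range n, (p.2 + 1) *
        (Finset.univ.filter (fun l : Nat.Partition n => p.1 + 1 ≤ l.parts.count (p.2 + 1))).card :=
        Finset.sum_le_sum_of_subset (Finset.filter_subset _ _)
    _ = ∑ l : Nat.Partition n, ∑ v ∈ Finset.range n, (v + 1) *
          ((Finset.range n).filter (fun k => k + 1 ≤ l.parts.count (v + 1))).card := by
        simp only [Finset.card_filter, Finset.mul_sum]
        rw [Finset.sum_comm]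
        refine Finset.sum_congr rfl fun l _ => ?_
        rw [Finset.sum_product_right]
    _ ≤ ∑ l : Nat.Partition n, ∑ v ∈ Finset.range n, (v + 1) * l.parts.count (v + 1) := by
        refine Finset.sum_le_sum fun l _ => Finset.sum_le_sum fun v _ => Nat.mul_le_mul_left _ ?_
        calc _ ≤ (Finset.range (l.parts.count (v + 1))).card := by
              refine Finset.card_le_card fun k hk => ?_
              have := (Finset.mem_filter.1 hk).2
              simp; omega
          _ = _ := by simp
    _ = n * Fintype.card (Nat.Partition n) := by
        simp [sum_count_le, mul_comm]
noncomputable def aP (t : ℝ) (p : ℕ × ℕ) : ℝ :=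
  ((p.2 : ℝ) + 1) * Real.exp (-(((p.1 : ℝ) + 1) * ((p.2 : ℝ) + 1) * t))

lemma aP_nonneg (t : ℝ) (p : ℕ × ℕ) : 0 ≤ aP t p := by unfold aP; positivity

lemma hasSum_inner (y : ℝ) (hy : 0 < y) :
    HasSum (fun v : ℕ => ((v : ℝ) + 1) * Real.exp (-(((v : ℝ) + 1) * y)))
      (Real.exp (-y) / (1 - Real.exp (-y)) ^ 2) := by
  have h1 : ‖Real.exp (-y)‖ < 1 := by
    rw [Real.norm_eq_abs, abs_of_pos (Real.exp_pos _)]; simpa using hy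
  have h := hasSum_coe_mul_geometric_of_norm_lt_one h1
  have h2 := (hasSum_nat_add_iff' 1).2 h
  simp only [Finset.range_one, Finset.sum_singleton, Nat.cast_zero, zero_mul, sub_zero] at h2
  refine h2.congr_fun ?_ |> fun h => h
  intro v
  push_cast
  rw [← Real.exp_nat_mul]
  congr 2
  push_cast; ring

lemma E_le (y : ℝ) (hy : 0 < y) : Real.exp (-y) / (1 - Real.exp (-y)) ^ 2 ≤ 1 / y ^ 2 := by
  have hs : y / 2 ≤ Real.sinh (y / 2) := Real.self_le_sinh_iff.2 (by positivity)
  rw [Real.sinh_eq] at hs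
  set a := Real.exp (-(y / 2)) with ha
  have hb : Real.exp (y / 2) = a⁻¹ := by rw [ha, Real.exp_neg, inv_inv]
  have hy2 : Real.exp (-y) = a ^ 2 := by rw [ha, ← Real.exp_nat_mul]; congr 1; push_cast; ring
  have ha0 : 0 < a := Real.exp_pos _
  have ha1 : a < 1 := by rw [ha]; simpa using hy
  rw [hb] at hs
  rw [hy2]
  have h3 : y * a ≤ 1 - a ^ 2 := by
    have : y * a ≤ (a⁻¹ - a) * a := by gcongr; linarith
    rw [sub_mul, inv_mul_cancel₀ ha0.ne'] at this; nlinarith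
  have h4 : 0 < 1 - a ^ 2 := lt_of_lt_of_le (by positivity) h3
  rw [div_le_div_iff₀ (by positivity) (by positivity)]
  have : (y * a) ^ 2 ≤ (1 - a ^ 2) ^ 2 := by gcongr
  nlinarith

lemma E_ge (y : ℝ) (hy : 0 < y) :
    1 / y ^ 2 - 4 / (1 + y) ^ 2 ≤ Real.exp (-y) / (1 - Real.exp (-y)) ^ 2 := by
  have hE : 0 ≤ Real.exp (-y) / (1 - Real.exp (-y)) ^ 2 := by positivity
  rcases le_or_gt 1 y with h | h
  · refine le_trans ?_ hE
    rw [sub_nonpos, div_le_div_iff₀ (by positivity) (by positivity)]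
    nlinarith
  · have h1 : 1 / y ^ 2 - 4 / (1 + y) ^ 2 ≤ 1 / y ^ 2 - 1 := by
      have : (1 : ℝ) ≤ 4 / (1 + y) ^ 2 := by
        rw [le_div_iff₀ (by positivity)]; nlinarith
      linarith
    refine h1.trans ?_
    have hc := Real.cosh_le_exp_half_sq y
    rw [Real.cosh_eq] at hc
    have hw : Real.exp (y ^ 2 / 2) ≤ 1 / (1 - y ^ 2 / 2) := by
      have h5 : (0 : ℝ) < 1 - y ^ 2 / 2 := by nlinarith
      have := Real.add_one_le_exp (-(y ^ 2 / 2))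
      rw [Real.exp_neg] at this
      rw [le_div_iff₀ h5]
      have hp := Real.exp_pos (y ^ 2 / 2)
      calc _ ≤ Real.exp (y ^ 2 / 2) * (Real.exp (y ^ 2 / 2))⁻¹ := by gcongr; linarith
        _ = 1 := mul_inv_cancel₀ hp.ne'
    set b := Real.exp (-y) with hb
    have hb0 : 0 < b := Real.exp_pos _
    have hb1 : b < 1 := by rw [hb]; simpa using hy
    have hey : Real.exp y = b⁻¹ := by rw [hb, Real.exp_neg, inv_inv]
    rw [hey] at hc
    have h6 : (1 - b) ^ 2 = b * (b⁻¹ + b - 2) := by field_simp; ring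
    have h7 : (1 : ℝ) / (1 - y ^ 2 / 2) ≤ 1 + (y ^ 2 / 2) / (1 - y ^ 2) := by
      have h5 : (0 : ℝ) < 1 - y ^ 2 / 2 := by nlinarith
      have h8 : (0 : ℝ) < 1 - y ^ 2 := by nlinarith
      rw [div_le_iff₀ h5]
      have : (1 + y ^ 2 / 2 / (1 - y ^ 2)) * (1 - y ^ 2 / 2) - 1 =
        (y ^ 2 / 2) * (y ^ 2 / 2) / (1 - y ^ 2) := by field_simp; ring
      have : 0 ≤ (y ^ 2 / 2) * (y ^ 2 / 2) / (1 - y ^ 2) := by positivity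
      linarith
    have h8 : (0 : ℝ) < 1 - y ^ 2 := by nlinarith
    have h9 : b⁻¹ + b - 2 ≤ y ^ 2 / (1 - y ^ 2) := by
      have : y ^ 2 / (1 - y ^ 2) = 2 * ((y ^ 2 / 2) / (1 - y ^ 2)) := by ring
      linarith
    rw [le_div_iff₀ (by have : 0 < 1 - b := by linarith
                        positivity), h6]
    have h10 : (1 / y ^ 2 - 1) = (1 - y ^ 2) / y ^ 2 := by field_simp
    rw [h10]
    calc _ ≤ (1 - y ^ 2) / y ^ 2 * (b * (y ^ 2 / (1 - y ^ 2))) := by gcongr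
      _ = b := by field_simp

lemma tele_bound (t : ℝ) (ht : 0 < t) :
    Summable (fun k : ℕ => 4 / (1 + ((k : ℝ) + 1) * t) ^ 2) ∧
      ∑' k : ℕ, 4 / (1 + ((k : ℝ) + 1) * t) ^ 2 ≤ 4 / t := by
  have key : ∀ n : ℕ, ∑ k ∈ Finset.range n, 4 / (1 + ((k : ℝ) + 1) * t) ^ 2
      ≤ 4 / t - 4 / t / (1 + n * t) := by
    intro n
    induction n with
    | zero => simp
    | succ n ih =>
      rw [Finset.sum_range_succ]
      have : 4 / (1 + ((n : ℝ) + 1) * t) ^ 2 ≤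
          4 / t / (1 + n * t) - 4 / t / (1 + ((n + 1 : ℕ) : ℝ) * t) := by
        push_cast
        have h1 : 0 < 1 + (n : ℝ) * t := by positivity
        have h2 : 0 < 1 + ((n : ℝ) + 1) * t := by positivity
        have : 4 / t / (1 + n * t) - 4 / t / (1 + ((n : ℝ) + 1) * t) =
            4 / ((1 + n * t) * (1 + ((n : ℝ) + 1) * t)) := by
          field_simp; ring
        rw [this, sq]
        gcongr
        linarith
      linarith
  have key2 : ∀ n : ℕ, ∑ k ∈ Finset.range n, 4 / (1 + ((k : ℝ) + 1) * t) ^ 2 ≤ 4 / t := by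
    intro n
    have : 0 ≤ 4 / t / (1 + n * t) := by positivity
    linarith [key n]
  have nn : ∀ k : ℕ, 0 ≤ 4 / (1 + ((k : ℝ) + 1) * t) ^ 2 := fun k => by positivity
  exact ⟨summable_of_sum_range_le nn key2, Real.tsum_le_of_sum_range_le nn key2⟩

lemma zeta_shift (t : ℝ) :
    HasSum (fun k : ℕ => 1 / (((k : ℝ) + 1) * t) ^ 2) (Real.pi ^ 2 / 6 / t ^ 2) := by
  have h := (hasSum_nat_add_iff' 1).2 hasSum_zeta_two
  simp only [Finset.range_one, Finset.sum_singleton, Nat.cast_zero] at h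
  have h2 := h.div_const (t ^ 2)
  have e1 : (Real.pi ^ 2 / 6 - 1 / (0 : ℝ) ^ 2) / t ^ 2 = Real.pi ^ 2 / 6 / t ^ 2 := by simp
  rw [e1] at h2
  refine h2.congr_fun ?_ |> fun h => h
  intro k
  push_cast; rw [mul_pow, div_div]

lemma inner_aP (t : ℝ) (ht : 0 < t) (k : ℕ) :
    HasSum (fun v : ℕ => aP t (k, v))
      (Real.exp (-(((k : ℝ) + 1) * t)) / (1 - Real.exp (-(((k : ℝ) + 1) * t))) ^ 2) := by
  have h := hasSum_inner (((k : ℝ) + 1) * t) (by positivity)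
  refine h.congr_fun ?_ |> fun h => h
  intro v
  simp only [aP]
  congr 2; ring

lemma summable_outer (t : ℝ) (ht : 0 < t) : Summable (fun k : ℕ =>
    (Real.exp (-(((k : ℝ) + 1) * t)) / (1 - Real.exp (-(((k : ℝ) + 1) * t))) ^ 2)) :=
  Summable.of_nonneg_of_le (fun k => by positivity) (fun k => E_le _ (by positivity))
    (zeta_shift t).summable

lemma summable_aP (t : ℝ) (ht : 0 < t) : Summable (aP t) := by
  rw [summable_prod_of_nonneg (fun p => aP_nonneg t p)]
  refine ⟨fun k => (inner_aP t ht k).summable, ?_⟩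
  simp_rw [fun k => (inner_aP t ht k).tsum_eq]
  exact summable_outer t ht

lemma tsum_aP (t : ℝ) (ht : 0 < t) : ∑' p, aP t p = ∑' k : ℕ,
    (Real.exp (-(((k : ℝ) + 1) * t)) / (1 - Real.exp (-(((k : ℝ) + 1) * t))) ^ 2) := by
  rw [(summable_aP t ht).tsum_prod]
  simp_rw [fun k => (inner_aP t ht k).tsum_eq]

lemma S0_le (t : ℝ) (ht : 0 < t) : ∑' p, aP t p ≤ Real.pi ^ 2 / 6 / t ^ 2 := by
  rw [tsum_aP t ht, ← (zeta_shift t).tsum_eq]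
  exact (summable_outer t ht).tsum_le_tsum (fun k => E_le _ (by positivity))
    (zeta_shift t).summable

lemma S0_ge (t : ℝ) (ht : 0 < t) : Real.pi ^ 2 / 6 / t ^ 2 - 4 / t ≤ ∑' p, aP t p := by
  rw [tsum_aP t ht, ← (zeta_shift t).tsum_eq]
  obtain ⟨hs, hb⟩ := tele_bound t ht
  have h1 := ((zeta_shift t).summable.sub hs).tsum_le_tsum
    (fun k : ℕ => E_ge (((k : ℝ) + 1) * t) (by positivity)) (summable_outer t ht)
  rw [(zeta_shift t).summable.tsum_sub hs] at h1
  linarith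

/-- weight x = kv -/
def xP (p : ℕ × ℕ) : ℝ := ((p.1 : ℝ) + 1) * ((p.2 : ℝ) + 1)

lemma xP_pos (p : ℕ × ℕ) : 0 < xP p := by unfold xP; positivity

lemma aP_pow_le (r : ℕ) (t : ℝ) (ht : 0 < t) (p : ℕ × ℕ) :
    aP t p * xP p ^ r ≤ (r.factorial * (2 / t) ^ r) * aP (t / 2) p := by
  have h := Real.pow_div_factorial_le_exp (x := xP p * (t / 2))
    (by have := xP_pos p; positivity) r
  rw [div_le_iff₀ (by positivity)] at h
  have h1 : aP t p = aP (t / 2) p * Real.exp (-(xP p * (t / 2))) := by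
    unfold aP xP
    rw [mul_assoc ((p.2 : ℝ) + 1), ← Real.exp_add]
    congr 2; ring
  have h2 : xP p ^ r = (xP p * (t / 2)) ^ r * (2 / t) ^ r := by
    rw [← mul_pow]; congr 1; field_simp
  rw [h1, h2]
  have h3 := aP_nonneg (t / 2) p
  calc _ ≤ aP (t / 2) p * Real.exp (-(xP p * (t / 2))) *
        ((Real.exp (xP p * (t / 2)) * r.factorial) * (2 / t) ^ r) := by gcongr
    _ = (Real.exp (-(xP p * (t / 2))) * Real.exp (xP p * (t / 2))) *
        (r.factorial * (2 / t) ^ r * aP (t / 2) p) := by ring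
    _ = _ := by rw [← Real.exp_add]; simp

lemma summable_aP_pow (r : ℕ) (t : ℝ) (ht : 0 < t) : Summable (fun p => aP t p * xP p ^ r) :=
  Summable.of_nonneg_of_le
    (fun p => mul_nonneg (aP_nonneg t p) (pow_nonneg (xP_pos p).le r))
    (aP_pow_le r t ht) ((summable_aP (t / 2) (by positivity)).mul_left _)

lemma Sr_le (r : ℕ) (t : ℝ) (ht : 0 < t) :
    ∑' p, aP t p * xP p ^ r ≤ (r.factorial * 2 ^ r * (2 * Real.pi ^ 2 / 3)) / t ^ (r + 2) := by
  have h1 := (summable_aP_pow r t ht).tsum_le_tsum (aP_pow_le r t ht)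
    ((summable_aP (t / 2) (by positivity)).mul_left _)
  rw [tsum_mul_left] at h1
  refine h1.trans ?_
  calc _ ≤ (r.factorial * (2 / t) ^ r) * (Real.pi ^ 2 / 6 / (t / 2) ^ 2) := by
        gcongr; exact S0_le _ (by positivity)
    _ = _ := by rw [div_pow, pow_add]; field_simp; norm_num

lemma S1_ge : ∃ c : ℝ, 0 < c ∧ ∀ t : ℝ, 0 < t → t ≤ 1 → c / t ^ 3 ≤ ∑' p, aP t p * xP p ^ 1 := by
  refine ⟨Real.exp (-1), by positivity, fun t ht ht1 => ?_⟩
  have hinj : Function.Injective (fun v : ℕ => ((0, v) : ℕ × ℕ)) := fun a b h => by simpa using h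
  have hs := summable_aP_pow 1 t ht
  have h1 : ∑' v : ℕ, aP t (0, v) * xP (0, v) ^ 1 ≤ ∑' p, aP t p * xP p ^ 1 :=
    tsum_comp_le_tsum_of_inj hs
      (fun p => mul_nonneg (aP_nonneg t p) (pow_nonneg (xP_pos p).le 1)) hinj
  refine le_trans ?_ h1
  have hsv : Summable (fun v : ℕ => aP t (0, v) * xP (0, v) ^ 1) := hs.comp_injective hinj
  set q := Real.exp (-t) with hq
  have hq0 : 0 < q := Real.exp_pos _
  have hq1 : q < 1 := by rw [hq]; simpa using ht
  have h2 := (hasSum_choose_mul_geometric_of_norm_lt_one 2 (r := q)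
    (by rwa [Real.norm_eq_abs, abs_of_pos hq0])).mul_left q
  have h3 : q * (1 / (1 - q) ^ (2 + 1)) ≤ ∑' v : ℕ, aP t (0, v) * xP (0, v) ^ 1 := by
    rw [← h2.tsum_eq]
    refine h2.summable.tsum_le_tsum (fun v => ?_) hsv
    have e1 : aP t (0, v) * xP (0, v) ^ 1 = ((v : ℝ) + 1) ^ 2 * q ^ (v + 1) := by
      simp only [aP, xP, hq, ← Real.exp_nat_mul]
      push_cast
      rw [show -((0 + 1) * ((v : ℝ) + 1) * t) = ((v : ℝ) + 1) * -t by ring]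
      ring
    have e2 : (((v + 2).choose 2 : ℕ) : ℝ) = ((v : ℝ) + 2) * (v + 1) / 2 := by
      rw [Nat.cast_choose_two]; push_cast; ring
    rw [e1, e2, pow_succ q]
    have : ((v : ℝ) + 2) * (v + 1) / 2 ≤ ((v : ℝ) + 1) ^ 2 := by
      have : (0 : ℝ) ≤ v := Nat.cast_nonneg v
      nlinarith
    calc _ = ((v : ℝ) + 2) * (v + 1) / 2 * (q ^ v * q) := by ring
      _ ≤ _ := by gcongr
  refine le_trans ?_ h3
  have h4 : 1 - q ≤ t := by have := Real.add_one_le_exp (-t); linarith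
  have h5 : 0 < 1 - q := by linarith
  have h6 : Real.exp (-1) ≤ q := Real.exp_le_exp.2 (by linarith)
  rw [div_eq_mul_one_div]
  gcongr
noncomputable def tN (n : ℝ) : ℝ := Real.pi / Real.sqrt 6 / Real.sqrt n

noncomputable def fR (K : ℕ) (u : ℝ) : ℝ :=
  Real.exp (2 * (Real.pi / Real.sqrt 6) * Real.sqrt u) / u ^ K

lemma fR_nonneg (K : ℕ) (u : ℝ) (hu : 0 ≤ u) : 0 ≤ fR K u := by unfold fR; positivity

lemma tN_pos (n : ℝ) (hn : 0 < n) : 0 < tN n := by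
  unfold tN; have := Real.pi_pos; positivity

lemma tN_sq (n : ℝ) (hn : 0 < n) : n = Real.pi ^ 2 / 6 / tN n ^ 2 := by
  unfold tN
  have h1 : Real.sqrt n ≠ 0 := by positivity
  have h2 : Real.sqrt 6 ≠ 0 := by positivity
  have := Real.pi_pos
  rw [div_pow, div_pow, Real.sq_sqrt hn.le, Real.sq_sqrt (by norm_num)]
  field_simp

lemma fR_lower (K : ℕ) (n x : ℝ) (hn : 0 < n) (hx : 0 ≤ x) (hxn : x < n) :
    fR K n * (Real.exp (-(x * tN n)) * ((1 - tN n * x ^ 2 / n) * (1 + K * (x / n)))) ≤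
      fR K (n - x) := by
  set c := Real.pi / Real.sqrt 6 with hc
  have hc0 : 0 < c := by have := Real.pi_pos; positivity
  set a := Real.sqrt n with ha
  set b := Real.sqrt (n - x) with hb
  have ha0 : 0 < a := Real.sqrt_pos.2 hn
  have hb0 : 0 < b := Real.sqrt_pos.2 (by linarith)
  have ha2 : a ^ 2 = n := Real.sq_sqrt hn.le
  have hb2 : b ^ 2 = n - x := Real.sq_sqrt (by linarith)
  have hxe : x = a ^ 2 - b ^ 2 := by linarith
  have ht : tN n = c / a := rfl
  have hexp : 2 * c * a - x * tN n - tN n * x ^ 2 / n ≤ 2 * c * b := by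
    rw [ht, hxe, ← ha2]
    have : 2 * c * b - (2 * c * a - (a ^ 2 - b ^ 2) * (c / a) - c / a * (a ^ 2 - b ^ 2) ^ 2 / a ^ 2)
        = c / a ^ 3 * (a - b) ^ 2 * (2 * a * b + b ^ 2) := by
      field_simp; ring
    have h2 : 0 ≤ c / a ^ 3 * (a - b) ^ 2 * (2 * a * b + b ^ 2) := by positivity
    linarith
  have hpoly : (1 + K * (x / n)) * (n - x) ^ K ≤ n ^ K := by
    have h1 : 1 + K * (x / n) ≤ (1 + x / n) ^ K :=
      one_add_mul_le_pow (by have : 0 ≤ x / n := by positivity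
                             linarith) K
    have hnx : 0 ≤ n - x := by linarith
    calc _ ≤ (1 + x / n) ^ K * (n - x) ^ K := by gcongr
      _ = ((1 + x / n) * (n - x)) ^ K := by rw [mul_pow]
      _ ≤ n ^ K := by
        have : (1 + x / n) * (n - x) = n - x ^ 2 / n := by field_simp; ring
        have h3 : 0 ≤ x ^ 2 / n := by positivity
        have h4 : 0 ≤ (1 + x / n) * (n - x) := by positivity
        gcongr
        linarith
  have hz := Real.add_one_le_exp (-(tN n * x ^ 2 / n))
  have hnx : 0 < n - x := by linarith
  unfold fR
  rw [← hc, ← ha, ← hb, le_div_iff₀ (by positivity)]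
  calc _ = (Real.exp (2 * c * a) * Real.exp (-(x * tN n)) * (1 - tN n * x ^ 2 / n)) *
        (((1 + K * (x / n)) * (n - x) ^ K) / n ^ K) := by ring
    _ ≤ (Real.exp (2 * c * a) * Real.exp (-(x * tN n)) * Real.exp (-(tN n * x ^ 2 / n))) *
        (((1 + K * (x / n)) * (n - x) ^ K) / n ^ K) := by
        gcongr; linarith
    _ ≤ Real.exp (2 * c * b) * 1 := by
        rw [← Real.exp_add, ← Real.exp_add]
        gcongr
        · linarith
        · rw [div_le_one (by positivity)]; exact hpoly
    _ = _ := mul_one _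

lemma c_ge : 1 ≤ Real.pi / Real.sqrt 6 := by
  rw [le_div_iff₀ (by positivity), one_mul]
  have := Real.pi_gt_three
  rw [Real.sqrt_le_left (by positivity)]; nlinarith

lemma tN_mul_ge (n : ℝ) (hn : 1 ≤ n) : 1 ≤ tN n * n := by
  unfold tN
  have h : Real.sqrt n * Real.sqrt n = n := Real.mul_self_sqrt (by linarith)
  have h1 : 1 ≤ Real.sqrt n := Real.one_le_sqrt.2 hn
  have h2 : Real.pi / Real.sqrt 6 / Real.sqrt n * n = Real.pi / Real.sqrt 6 * Real.sqrt n := by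
    have h3 : Real.sqrt n ≠ 0 := by positivity
    calc _ = Real.pi / Real.sqrt 6 / Real.sqrt n * (Real.sqrt n * Real.sqrt n) := by rw [h]
      _ = _ := by field_simp
  rw [h2]
  exact one_le_mul_of_one_le_of_one_le c_ge h1

/-- the weight -/
noncomputable def wP (K : ℕ) (n : ℝ) (p : ℕ × ℕ) : ℝ :=
  (1 - tN n * xP p ^ 2 / n) * (1 + K * (xP p / n))

lemma wP_nonpos (K : ℕ) (n : ℝ) (hn : 1 ≤ n) (p : ℕ × ℕ) (h : n ≤ xP p) : wP K n p ≤ 0 := by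
  unfold wP
  have hx := xP_pos p
  have h0 : 0 < n := by linarith
  refine mul_nonpos_of_nonpos_of_nonneg ?_ (by positivity)
  rw [sub_nonpos, le_div_iff₀ h0, one_mul]
  have h1 := tN_mul_ge n hn
  have h2 := tN_pos n h0
  calc n = 1 * n := (one_mul n).symm
    _ ≤ (tN n * n) * n := by gcongr
    _ = tN n * n ^ 2 := by ring
    _ ≤ _ := by gcongr

lemma tsum_wP (K : ℕ) (n : ℝ) (hn : 0 < n) :
    Summable (fun p => aP (tN n) p * wP K n p) ∧
    ∑' p, aP (tN n) p * wP K n p = ∑' p, aP (tN n) p + K / n * ∑' p, aP (tN n) p * xP p ^ 1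
      - tN n / n * ∑' p, aP (tN n) p * xP p ^ 2
      - K * tN n / n ^ 2 * ∑' p, aP (tN n) p * xP p ^ 3 := by
  have ht := tN_pos n hn
  have h0 := (summable_aP _ ht).hasSum
  have h1 := (summable_aP_pow 1 _ ht).hasSum.mul_left (K / n)
  have h2 := (summable_aP_pow 2 _ ht).hasSum.mul_left (tN n / n)
  have h3 := (summable_aP_pow 3 _ ht).hasSum.mul_left (K * tN n / n ^ 2)
  have h := ((h0.add h1).sub h2).sub h3
  have he : (fun p => aP (tN n) p * wP K n p) = (fun b =>
      aP (tN n) b + ↑K / n * (aP (tN n) b * xP b ^ 1) - tN n / n * (aP (tN n) b * xP b ^ 2) -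
        ↑K * tN n / n ^ 2 * (aP (tN n) b * xP b ^ 3)) := by
    funext p
    unfold wP
    field_simp
    ring
  have h' := h
  rw [← he] at h'
  exact ⟨h'.summable, h'.tsum_eq⟩

lemma tN_tendsto : Tendsto (fun n : ℕ => tN n) atTop (𝓝 0) := by
  unfold tN
  refine Tendsto.div_atTop tendsto_const_nhds ?_
  exact Real.tendsto_sqrt_atTop.comp tendsto_natCast_atTop_atTop

lemma exists_K : ∃ K : ℕ, 1 ≤ K ∧ ∃ n0 : ℕ, 1 ≤ n0 ∧ ∀ n : ℕ, n0 ≤ n →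
    (n : ℝ) ≤ ∑' p, aP (tN n) p * wP K n p := by
  obtain ⟨c1, hc1, hS1⟩ := S1_ge
  set Z : ℝ := Real.pi ^ 2 / 6 with hZ
  have hZ0 : 0 < Z := by have := Real.pi_pos; positivity
  set C2 : ℝ := (Nat.factorial 2 * 2 ^ 2 * (2 * Real.pi ^ 2 / 3)) with hC2
  set C3 : ℝ := (Nat.factorial 3 * 2 ^ 3 * (2 * Real.pi ^ 2 / 3)) with hC3
  have hC3' : 0 < C3 := by have := Real.pi_pos; positivity
  obtain ⟨K, hK⟩ := exists_nat_ge (2 * (4 * Z + C2) / c1 + 1)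
  have hC2' : 0 < C2 := by have := Real.pi_pos; positivity
  have hK1 : (1 : ℝ) ≤ K := by
    have : 0 ≤ 2 * (4 * Z + C2) / c1 := by positivity
    linarith
  have hK2 : 2 * (4 * Z + C2) ≤ K * c1 := by
    rw [← div_le_iff₀ hc1]; linarith
  have hev := tN_tendsto.eventually (gt_mem_nhds (show (0 : ℝ) < min 1 (c1 * Z / (2 * C3)) by positivity))
  obtain ⟨n0, hn0⟩ := eventually_atTop.1 hev
  refine ⟨K, by exact_mod_cast hK1, max n0 1, le_max_right _ _, fun n hn => ?_⟩
  have hn1 : 1 ≤ n := le_trans (le_max_right _ _) hn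
  have hnr : (0 : ℝ) < n := by exact_mod_cast hn1
  have hlt := hn0 n (le_trans (le_max_left _ _) hn)
  rw [(tsum_wP K n hnr).2]
  have ht := tN_pos n hnr
  have hnt := tN_sq n hnr
  rw [← hZ] at hnt
  set t := tN n with htdef
  have a0 := S0_ge t ht
  rw [← hZ, ← hnt] at a0
  have a1 := hS1 t ht (hlt.le.trans (min_le_left _ _))
  have a2 := Sr_le 2 t ht
  have a3 := Sr_le 3 t ht
  rw [← hC2] at a2
  rw [← hC3] at a3
  have hlt2 : t ≤ c1 * Z / (2 * C3) := hlt.le.trans (min_le_right _ _)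
  rw [le_div_iff₀ (by positivity)] at hlt2
  have b1 : K * c1 / (Z * t) ≤ K / n * ∑' p, aP t p * xP p ^ 1 := by
    calc _ = K / n * (c1 / t ^ 3) := by rw [hnt]; field_simp
      _ ≤ _ := by gcongr
  have b2 : t / n * ∑' p, aP t p * xP p ^ 2 ≤ C2 / (Z * t) := by
    calc _ ≤ t / n * (C2 / t ^ (2 + 2)) := by gcongr
      _ = _ := by rw [hnt]; field_simp
  have b3 : K * t / (n : ℝ) ^ 2 * ∑' p, aP t p * xP p ^ 3 ≤ K * C3 / Z ^ 2 := by
    calc _ ≤ K * t / (n : ℝ) ^ 2 * (C3 / t ^ (3 + 2)) := by gcongr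
      _ = _ := by rw [hnt]; field_simp
  have fin : 0 ≤ K * c1 / (Z * t) - 4 / t - C2 / (Z * t) - K * C3 / Z ^ 2 := by
    have : K * c1 / (Z * t) - 4 / t - C2 / (Z * t) - K * C3 / Z ^ 2 =
      ((K * c1 - 4 * Z - C2) * Z - K * C3 * t) / (Z ^ 2 * t) := by field_simp
    rw [this]
    apply div_nonneg _ (by positivity)
    nlinarith
  linarith

lemma partition_lower : ∃ K : ℕ, ∃ A : ℝ, 0 < A ∧ ∀ n : ℕ,
    A * fR K n ≤ Fintype.card (Nat.Partition n) := by
  obtain ⟨K, hK, n0, hn0, H⟩ := exists_K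
  have hpos : ∀ n : ℕ, (1 : ℝ) ≤ Fintype.card (Nat.Partition n) := fun n => by
    exact_mod_cast Fintype.card_pos
  have hf0 : ∀ m : ℕ, 0 ≤ fR K m := fun m => fR_nonneg K m (Nat.cast_nonneg m)
  set B : ℝ := 1 + ∑ m ∈ Finset.range n0, fR K m with hB
  have hB0 : 0 < B := by
    have : 0 ≤ ∑ m ∈ Finset.range n0, fR K m := Finset.sum_nonneg fun m _ => hf0 m
    linarith
  refine ⟨K, 1 / B, by positivity, fun n => ?_⟩
  induction n using Nat.strong_induction_on with
  | _ n ih =>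
  rcases lt_or_ge n n0 with hlt | hge
  · refine le_trans ?_ (hpos n)
    rw [one_div, inv_mul_le_iff₀ hB0, mul_one]
    have := Finset.single_le_sum (f := fun m : ℕ => fR K m) (fun m _ => hf0 m)
      (Finset.mem_range.2 hlt)
    linarith
  · have hn1 : 1 ≤ n := hn0.trans hge
    have hnr : (1 : ℝ) ≤ n := by exact_mod_cast hn1
    have hn0' : (0 : ℝ) < n := by linarith
    have hrec := card_recursion n
    have hrec' : ∑ p ∈ idx n, ((p.2 : ℝ) + 1) *
        (Fintype.card (Nat.Partition (n - (p.1 + 1) * (p.2 + 1))) : ℝ)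
        ≤ n * Fintype.card (Nat.Partition n) := by exact_mod_cast hrec
    have hterm : ∀ p ∈ idx n, 1 / B * fR K n * (aP (tN n) p * wP K n p) ≤ ((p.2 : ℝ) + 1) *
        (Fintype.card (Nat.Partition (n - (p.1 + 1) * (p.2 + 1))) : ℝ) := by
      intro p hp
      have hle : (p.1 + 1) * (p.2 + 1) ≤ n := (Finset.mem_filter.1 hp).2
      have hxe : (((p.1 + 1) * (p.2 + 1) : ℕ) : ℝ) = xP p := by unfold xP; push_cast; ring
      have hxp : 0 < (p.1 + 1) * (p.2 + 1) := by positivity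
      rcases hle.lt_or_eq with h | h
      · have hih := ih (n - (p.1 + 1) * (p.2 + 1)) (by omega)
        rw [Nat.cast_sub hle, hxe] at hih
        have hl := fR_lower K n (xP p) hn0' (xP_pos p).le (by rw [← hxe]; exact_mod_cast h)
        have hl2 : 1 / B * (fR K n *
          (Real.exp (-(xP p * tN n)) * ((1 - tN n * xP p ^ 2 / n) * (1 + K * (xP p / n))))) ≤
            (Fintype.card (Nat.Partition (n - (p.1 + 1) * (p.2 + 1))) : ℝ) := by
          refine le_trans ?_ hih
          gcongr
        calc _ = ((p.2 : ℝ) + 1) * (1 / B * (fR K n *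
            (Real.exp (-(xP p * tN n)) * ((1 - tN n * xP p ^ 2 / n) * (1 + K * (xP p / n)))))) := by
              unfold aP wP xP; ring
          _ ≤ _ := by gcongr
      · have hw := wP_nonpos K n hnr p (by rw [← hxe, h])
        have : 1 / B * fR K n * (aP (tN n) p * wP K n p) ≤ 0 :=
          mul_nonpos_of_nonneg_of_nonpos (mul_nonneg (by positivity) (hf0 n))
            (mul_nonpos_of_nonneg_of_nonpos (aP_nonneg _ _) hw)
        exact this.trans (by positivity)
    have hsum : ∑' p, aP (tN n) p * wP K n p ≤ ∑ p ∈ idx n, aP (tN n) p * wP K n p := by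
      have hs := (tsum_wP K n hn0').1
      have := hs.neg.sum_le_tsum (idx n) (fun p hp => ?_)
      · rw [tsum_neg, Finset.sum_neg_distrib] at this; linarith
      · have hgt : n ≤ (p.1 + 1) * (p.2 + 1) := by
          by_contra hcon
          apply hp
          push Not at hcon
          simp only [idx, Finset.mem_filter, Finset.mem_product, Finset.mem_range]
          refine ⟨⟨?_, ?_⟩, hcon.le⟩ <;> nlinarith
        have hw := wP_nonpos K n hnr p (by
          have : ((n : ℕ) : ℝ) ≤ (((p.1 + 1) * (p.2 + 1) : ℕ) : ℝ) := by exact_mod_cast hgt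
          unfold xP; push_cast at this; exact this)
        have := mul_nonpos_of_nonneg_of_nonpos (aP_nonneg (tN n) p) hw
        linarith
    have hA : 0 ≤ 1 / B * fR K n := mul_nonneg (by positivity) (hf0 n)
    have h1 : n * (1 / B * fR K n) ≤ n * (Fintype.card (Nat.Partition n) : ℝ) := by
      calc n * (1 / B * fR K n) = 1 / B * fR K n * n := mul_comm _ _
        _ ≤ 1 / B * fR K n * ∑ p ∈ idx n, aP (tN n) p * wP K n p := by
            gcongr; exact (H n hge).trans hsum
        _ = ∑ p ∈ idx n, 1 / B * fR K n * (aP (tN n) p * wP K n p) := by rw [Finset.mul_sum]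
        _ ≤ _ := Finset.sum_le_sum hterm
        _ ≤ _ := hrec'
    exact le_of_mul_le_mul_left h1 hn0'
lemma ya_le (y : ℝ) (hy : 0 ≤ y) :
    y * Real.exp (-y) ≤ Real.exp (-(y / 2)) * (1 - Real.exp (-y)) := by
  have hs : y / 2 ≤ Real.sinh (y / 2) := Real.self_le_sinh_iff.2 (by positivity)
  rw [Real.sinh_eq] at hs
  set a := Real.exp (-(y / 2)) with ha
  have hb : Real.exp (y / 2) = a⁻¹ := by rw [ha, Real.exp_neg, inv_inv]
  have hy2 : Real.exp (-y) = a ^ 2 := by rw [ha, ← Real.exp_nat_mul]; congr 1; push_cast; ring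
  have ha0 : 0 < a := Real.exp_pos _
  rw [hb] at hs
  rw [hy2]
  have h3 : y * a ≤ 1 - a ^ 2 := by
    have : y * a ≤ (a⁻¹ - a) * a := by gcongr; linarith
    rw [sub_mul, inv_mul_cancel₀ ha0.ne'] at this; nlinarith
  nlinarith

lemma exp_lt_one' (y : ℝ) (hy : 0 < y) : Real.exp (-y) < 1 := by simpa using hy

lemma geo_hasSum (s : ℝ) (hs : 0 < s) :
    HasSum (fun j : ℕ => Real.exp (-(((j : ℝ) + 1) * s)))
      (Real.exp (-s) / (1 - Real.exp (-s))) := by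
  have h := (hasSum_geometric_of_lt_one (Real.exp_pos (-s)).le (exp_lt_one' s hs)).mul_left
    (Real.exp (-s))
  rw [← div_eq_mul_inv] at h
  refine h.congr_fun ?_ |> fun h => h
  intro j
  rw [← Real.exp_nat_mul, ← Real.exp_add]; congr 1; ring

lemma geo_le (s : ℝ) (hs : 0 < s) : Real.exp (-s) / (1 - Real.exp (-s)) ≤ 1 / s := by
  have h1 := exp_lt_one' s hs
  have h2 : 0 < 1 - Real.exp (-s) := by linarith
  rw [div_le_div_iff₀ h2 hs, one_mul]
  have h3 := ya_le s hs.le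
  have h4 : Real.exp (-(s / 2)) ≤ 1 := (exp_lt_one' _ (by positivity)).le
  nlinarith

noncomputable def aT (d : ℝ) (j : ℕ) : ℝ :=
  (j + 1 : ℝ) * Real.exp (-(j + 1) * d) / (1 - Real.exp (-(j + 1) * d))

lemma aT_le (d : ℝ) (hd : 0 < d) (j : ℕ) :
    aT d j ≤ 1 / d * Real.exp (-(((j : ℝ) + 1) * (d / 2))) := by
  unfold aT
  rw [neg_mul]
  have hy : 0 < ((j : ℝ) + 1) * d := by positivity
  have h1 := exp_lt_one' _ hy
  have h2 := ya_le _ hy.le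
  rw [div_le_iff₀ (by linarith)]
  have h3 : ((j : ℝ) + 1) * d / 2 = ((j : ℝ) + 1) * (d / 2) := by ring
  rw [h3] at h2
  calc _ = 1 / d * (((j : ℝ) + 1) * d * Real.exp (-(((j : ℝ) + 1) * d))) := by field_simp
    _ ≤ 1 / d * (Real.exp (-(((j : ℝ) + 1) * (d / 2))) * (1 - Real.exp (-(((j : ℝ) + 1) * d)))) := by
        gcongr
    _ = _ := by ring

lemma aT_nonneg (d : ℝ) (hd : 0 < d) (j : ℕ) : 0 ≤ aT d j := by
  unfold aT
  rw [neg_mul]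
  have hy : 0 < ((j : ℝ) + 1) * d := by positivity
  have h1 := exp_lt_one' _ hy
  have : 0 < 1 - Real.exp (-(((j : ℝ) + 1) * d)) := by linarith
  positivity

lemma summable_aT (d : ℝ) (hd : 0 < d) : Summable (aT d) :=
  Summable.of_nonneg_of_le (aT_nonneg d hd) (aT_le d hd)
    ((geo_hasSum (d / 2) (by positivity)).summable.mul_left _)

lemma aFun_le (d : ℝ) (hd : 0 < d) : aFun d ≤ 2 / d ^ 2 := by
  have h := (summable_aT d hd).tsum_le_tsum (aT_le d hd)
    ((geo_hasSum (d / 2) (by positivity)).summable.mul_left _)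
  rw [tsum_mul_left, (geo_hasSum (d / 2) (by positivity)).tsum_eq] at h
  have h2 := geo_le (d / 2) (by positivity)
  calc aFun d ≤ _ := h
    _ ≤ 1 / d * (1 / (d / 2)) := by gcongr
    _ = 2 / d ^ 2 := by field_simp

lemma d_ge (d : ℝ) (hd : 0 < d) (n : ℕ) (h : aFun d = n) : 1 / ((n : ℝ) + 1) ≤ d := by
  have h1 : aT d 0 ≤ n := by
    rw [← h]
    exact (summable_aT d hd).le_tsum 0 (fun j _ => aT_nonneg d hd j)
  unfold aT at h1
  simp only [Nat.cast_zero, zero_add, one_mul, neg_mul] at h1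
  have h2 := exp_lt_one' d hd
  rw [div_le_iff₀ (by linarith)] at h1
  have h3 := Real.add_one_le_exp (-d)
  rw [div_le_iff₀ (by positivity)]
  have h4 : (0 : ℝ) ≤ n := Nat.cast_nonneg n
  nlinarith

noncomputable def phi (d : ℝ) (j : ℕ) : ℝ := -Real.log (1 - Real.exp (-(((j : ℝ) + 1) * d)))

noncomputable def bP (s : ℝ) (p : ℕ × ℕ) : ℝ :=
  Real.exp (-(((p.1 : ℝ) + 1) * (((p.2 : ℝ) + 1) * s))) / ((p.1 : ℝ) + 1)

lemma bP_nonneg (s : ℝ) (p : ℕ × ℕ) : 0 ≤ bP s p := by unfold bP; positivity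

lemma bP_row (s : ℝ) (hs : 0 < s) (k : ℕ) : Summable (fun j => bP s (k, j)) ∧
    ∑' j, bP s (k, j) ≤ 1 / s * (1 / (((k : ℝ) + 1) * 1) ^ 2) := by
  have h := (geo_hasSum (((k : ℝ) + 1) * s) (by positivity)).div_const ((k : ℝ) + 1)
  have he : (fun j => bP s (k, j)) = fun j : ℕ =>
      Real.exp (-(((j : ℝ) + 1) * (((k : ℝ) + 1) * s))) / ((k : ℝ) + 1) := by
    funext j; unfold bP; congr 3; ring
  rw [he]
  refine ⟨h.summable, ?_⟩
  rw [h.tsum_eq]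
  have h2 := geo_le (((k : ℝ) + 1) * s) (by positivity)
  calc _ ≤ 1 / (((k : ℝ) + 1) * s) / ((k : ℝ) + 1) := by gcongr
    _ = _ := by field_simp

lemma summable_bP (s : ℝ) (hs : 0 < s) : Summable (bP s) := by
  rw [summable_prod_of_nonneg (fun p => bP_nonneg s p)]
  refine ⟨fun k => (bP_row s hs k).1, ?_⟩
  exact Summable.of_nonneg_of_le (fun k => tsum_nonneg fun j => bP_nonneg s _)
    (fun k => (bP_row s hs k).2) ((zeta_shift 1).summable.mul_left _)

lemma bP_col (s : ℝ) (hs : 0 < s) (j : ℕ) : HasSum (fun k => bP s (k, j)) (phi s j) := by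
  have hy : 0 < ((j : ℝ) + 1) * s := by positivity
  have h := Real.hasSum_pow_div_log_of_abs_lt_one (x := Real.exp (-(((j : ℝ) + 1) * s)))
    (by rw [abs_of_pos (Real.exp_pos _)]; exact exp_lt_one' _ hy)
  refine h.congr_fun ?_ |> fun h => h
  intro k
  unfold bP
  rw [← Real.exp_nat_mul]
  congr 2; push_cast; ring

lemma phi_sum (s : ℝ) (hs : 0 < s) :
    Summable (phi s) ∧ ∑' j, phi s j ≤ Real.pi ^ 2 / 6 / s := by
  have hb := summable_bP s hs
  have hsw : Summable (fun p : ℕ × ℕ => bP s (p.2, p.1)) := hb.prod_symm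
  have e : (fun j => ∑' k, bP s (k, j)) = phi s := funext fun j => (bP_col s hs j).tsum_eq
  constructor
  · have := hsw.prod
    rw [← e]
    exact this
  · have h1 : ∑' j, phi s j = ∑' k, ∑' j, bP s (k, j) := by
      rw [← e]
      exact Summable.tsum_comm (f := fun k j => bP s (k, j)) hb
    rw [h1]
    have h2 := hb.prod.tsum_le_tsum (fun k => (bP_row s hs k).2)
      ((zeta_shift 1).summable.mul_left _)
    rw [tsum_mul_left, (zeta_shift 1).tsum_eq] at h2
    refine h2.trans (le_of_eq ?_)
    field_simp

lemma phi_tangent (d s : ℝ) (hd : 0 < d) (hs : 0 < s) (j : ℕ) :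
    phi d j ≤ phi s j + (s - d) * aT d j := by
  unfold phi aT
  rw [neg_mul]
  have hyd : 0 < ((j : ℝ) + 1) * d := by positivity
  have hys : 0 < ((j : ℝ) + 1) * s := by positivity
  have had := exp_lt_one' _ hyd
  have has := exp_lt_one' _ hys
  set a := Real.exp (-(((j : ℝ) + 1) * d)) with ha
  set b := Real.exp (-(((j : ℝ) + 1) * s)) with hb
  have ha0 : 0 < a := Real.exp_pos _
  have h1a : 0 < 1 - a := by linarith
  have h1b : 0 < 1 - b := by linarith
  have hl := Real.log_le_sub_one_of_pos (div_pos h1b h1a)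
  rw [Real.log_div h1b.ne' h1a.ne'] at hl
  have hba : b = a * Real.exp (-(((j : ℝ) + 1) * (s - d))) := by
    rw [ha, hb, ← Real.exp_add]; congr 1; ring
  have he := Real.add_one_le_exp (-(((j : ℝ) + 1) * (s - d)))
  have h2 : (1 - b) / (1 - a) - 1 ≤ (s - d) * ((j + 1) * a / (1 - a)) := by
    have : (1 - b) / (1 - a) - 1 = (a - b) / (1 - a) := by field_simp; ring
    rw [this, ← mul_div_assoc]
    gcongr
    rw [hba]
    nlinarith
  linarith

lemma saddle_le (d : ℝ) (hd : 0 < d) (n : ℕ) (hn : 1 ≤ n) (h : aFun d = n) :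
    n * d + ∑' j, phi d j ≤ 2 * (Real.pi / Real.sqrt 6) * Real.sqrt n := by
  have hnr : (0 : ℝ) < n := by exact_mod_cast hn
  have hs := tN_pos n hnr
  have hts := tN_sq n hnr
  obtain ⟨p1, p2⟩ := phi_sum (tN n) hs
  obtain ⟨q1, q2⟩ := phi_sum d hd
  have h1 := q1.tsum_le_tsum (fun j => phi_tangent d (tN n) hd hs j)
    (p1.add ((summable_aT d hd).mul_left _))
  rw [p1.tsum_add ((summable_aT d hd).mul_left _), tsum_mul_left] at h1
  have h2 : ∑' j, aT d j = n := h
  rw [h2] at h1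
  have h3 : Real.pi ^ 2 / 6 / tN n = n * tN n := by
    have h5 := (eq_div_iff (by positivity)).1 hts
    rw [div_eq_iff hs.ne', ← h5]; ring
  have h4 : n * tN n = Real.pi / Real.sqrt 6 * Real.sqrt n := by
    unfold tN
    have : Real.sqrt n * Real.sqrt n = n := Real.mul_self_sqrt hnr.le
    have h3 : Real.sqrt n ≠ 0 := by positivity
    calc _ = (Real.sqrt n * Real.sqrt n) * (Real.pi / Real.sqrt 6 / Real.sqrt n) := by rw [this]
      _ = _ := by field_simp
  nlinarith
lemma one_sub_norm_ge (w : ℂ) (hw : ‖w‖ < 1) :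
    (1 - ‖w‖) * Real.exp ((‖w‖ - w.re) / 4) ≤ ‖1 - w‖ := by
  set r := ‖w‖ with hr
  set u := r - w.re with hu
  have hr0 : 0 ≤ r := norm_nonneg w
  have hu0 : 0 ≤ u := by have := Complex.re_le_norm w; linarith
  have hu2 : u ≤ 2 := by
    have := (abs_le.1 (Complex.abs_re_le_norm w)).1; linarith
  have hsq : ‖1 - w‖ ^ 2 = (1 - r) ^ 2 + 2 * u := by
    rw [hu, hr, ← Complex.normSq_eq_norm_sq, Complex.normSq_apply]
    have : ‖w‖ ^ 2 = w.re * w.re + w.im * w.im := by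
      rw [← Complex.normSq_eq_norm_sq, Complex.normSq_apply]
    simp only [Complex.sub_re, Complex.one_re, Complex.sub_im, Complex.one_im]
    nlinarith
  have he : Real.exp (u / 2) ≤ 1 + u := by
    have := Real.abs_exp_sub_one_le (x := u / 2) (by rw [abs_of_nonneg (by positivity)]; linarith)
    rw [abs_of_nonneg (show 0 ≤ u / 2 by positivity)] at this
    have := (abs_le.1 this).2
    linarith
  refine le_of_sq_le_sq ?_ (norm_nonneg _) |> fun h => h
  rw [hsq, mul_pow, ← Real.exp_nat_mul]
  have h2 : ((2 : ℕ) : ℝ) * (u / 4) = u / 2 := by push_cast; ring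
  rw [h2]
  have h3 : (1 - r) ^ 2 ≤ 1 := by nlinarith
  calc _ ≤ (1 - r) ^ 2 * (1 + u) := by gcongr
    _ ≤ _ := by nlinarith

lemma z_pow (d θ : ℝ) (j : ℕ) : ‖Complex.exp (-(d : ℂ) + θ * Complex.I) ^ (j + 1)‖ =
    Real.exp (-(((j : ℝ) + 1) * d)) := by
  rw [norm_pow, Complex.norm_exp, ← Real.exp_nat_mul]
  congr 1; simp

lemma summable_pow_z (d θ : ℝ) (hd : 0 < d) :
    Summable (fun j : ℕ => Complex.exp (-(d : ℂ) + θ * Complex.I) ^ (j + 1)) :=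
  Summable.of_norm (by simp_rw [z_pow]; exact (geo_hasSum d hd).summable)

noncomputable def uT (d θ : ℝ) (j : ℕ) : ℝ :=
  Real.exp (-(((j : ℝ) + 1) * d)) - (Complex.exp (-(d : ℂ) + θ * Complex.I) ^ (j + 1)).re

lemma uT_summable (d θ : ℝ) (hd : 0 < d) : Summable (uT d θ) :=
  (geo_hasSum d hd).summable.sub (Complex.hasSum_re (summable_pow_z d θ hd).hasSum).summable

lemma gC_norm_le (d θ : ℝ) (hd : 0 < d) :
    ‖gC (Complex.exp (-(d : ℂ) + θ * Complex.I))‖ ≤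
      Real.exp (∑' j, phi d j - (∑' j, uT d θ j) / 4) := by
  set z := Complex.exp (-(d : ℂ) + θ * Complex.I) with hz
  have hlt : ∀ j : ℕ, ‖z ^ (j + 1)‖ < 1 := fun j => by
    rw [hz, z_pow]; exact exp_lt_one' _ (by positivity)
  have hne : ∀ j : ℕ, 1 - z ^ (j + 1) ≠ 0 := fun j h => by
    have h1 := hlt j
    rw [← sub_eq_zero.1 h] at h1; simp at h1
  have hq1 := exp_lt_one' d hd
  have hmul : Multipliable (fun j : ℕ => (1 - z ^ (j + 1))⁻¹) := by
    have he : (fun j : ℕ => (1 - z ^ (j + 1))⁻¹) =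
        fun j : ℕ => 1 + z ^ (j + 1) / (1 - z ^ (j + 1)) := by
      funext j
      have := hne j
      field_simp; ring
    rw [he]
    apply multipliable_one_add_of_summable
    refine Summable.of_nonneg_of_le (fun j => norm_nonneg _) (fun j => ?_)
      ((geo_hasSum d hd).summable.mul_left (1 / (1 - Real.exp (-d))))
    rw [norm_div, hz, z_pow, ← hz, div_eq_mul_one_div, mul_comm]
    have h1 : 1 - Real.exp (-d) ≤ ‖1 - z ^ (j + 1)‖ := by
      have h2 := norm_sub_norm_le (1 : ℂ) (z ^ (j + 1))
      rw [norm_one, hz, z_pow, ← hz] at h2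
      refine le_trans ?_ h2
      have : Real.exp (-(((j : ℝ) + 1) * d)) ≤ Real.exp (-d) := by
        apply Real.exp_le_exp.2
        have : (0 : ℝ) ≤ j := Nat.cast_nonneg j
        nlinarith
      linarith
    have h3 : 0 < 1 - Real.exp (-d) := by linarith
    gcongr
  have hT := hmul.hasProd.norm
  have hR : HasSum (fun j => phi d j - uT d θ j / 4) (∑' j, phi d j - (∑' j, uT d θ j) / 4) :=
    (phi_sum d hd).1.hasSum.sub ((uT_summable d θ hd).hasSum.div_const 4)
  have hR' := (Real.continuous_exp.tendsto _).comp hR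
  refine le_of_tendsto_of_tendsto' hT hR' (fun s => ?_)
  simp only [Function.comp]
  rw [Real.exp_sum]
  refine Finset.prod_le_prod (fun j _ => norm_nonneg _) (fun j _ => ?_)
  have h1 := one_sub_norm_ge _ (hlt j)
  rw [norm_inv]
  have hpos : 0 < 1 - Real.exp (-(((j : ℝ) + 1) * d)) := by
    have := exp_lt_one' (((j : ℝ) + 1) * d) (by positivity)
    linarith
  have hnz : ‖z ^ (j + 1)‖ = Real.exp (-(((j : ℝ) + 1) * d)) := by rw [hz, z_pow]
  rw [hnz] at h1
  have h2 : Real.exp (phi d j - uT d θ j / 4) =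
      ((1 - Real.exp (-(((j : ℝ) + 1) * d))) *
        Real.exp ((Real.exp (-(((j : ℝ) + 1) * d)) - (z ^ (j + 1)).re) / 4))⁻¹ := by
    unfold phi uT
    rw [sub_eq_add_neg, Real.exp_add, Real.exp_neg (Real.log _), Real.exp_log hpos, mul_inv,
      ← Real.exp_neg (_ / 4)]
  rw [h2]
  gcongr

lemma uT_tsum (d θ : ℝ) (hd : 0 < d) : ∑' j, uT d θ j =
    Real.exp (-d) * (1 + Real.exp (-d)) * (1 - Real.cos θ) /
      ((1 - Real.exp (-d)) * ((1 - Real.exp (-d)) ^ 2 + 2 * Real.exp (-d) * (1 - Real.cos θ))) := by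
  set q := Real.exp (-d) with hq
  have hq0 : 0 < q := Real.exp_pos _
  have hq1 : q < 1 := exp_lt_one' d hd
  set z := Complex.exp (-(d : ℂ) + θ * Complex.I) with hz
  have hzn : ‖z‖ < 1 := by
    rw [hz, Complex.norm_exp]; simpa using hd
  have hgeo : HasSum (fun j : ℕ => z ^ (j + 1)) (z * (1 - z)⁻¹) := by
    have := (hasSum_geometric_of_norm_lt_one hzn).mul_left z
    simpa [pow_succ'] using this
  have h1 := (geo_hasSum d hd).sub (Complex.hasSum_re hgeo)
  have h2 : ∑' j, uT d θ j = q / (1 - q) - (z * (1 - z)⁻¹).re := h1.tsum_eq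
  rw [h2]
  have hre : z.re = q * Real.cos θ := by
    rw [hz, Complex.exp_re]; simp [hq]
  have him : z.im = q * Real.sin θ := by
    rw [hz, Complex.exp_im]; simp [hq]
  have hcs := Real.sin_sq_add_cos_sq θ
  have hns : Complex.normSq (1 - z) = (1 - q) ^ 2 + 2 * q * (1 - Real.cos θ) := by
    rw [Complex.normSq_apply]
    simp only [Complex.sub_re, Complex.one_re, Complex.sub_im, Complex.one_im, hre, him]
    nlinarith
  have hcos := Real.cos_le_one θ
  have hD : 0 < (1 - q) ^ 2 + 2 * q * (1 - Real.cos θ) := by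
    have : 0 < (1 - q) ^ 2 := by have : 0 < 1 - q := by linarith
                                 positivity
    have : 0 ≤ 2 * q * (1 - Real.cos θ) := mul_nonneg (by positivity) (by linarith)
    linarith
  obtain ⟨D, hDe⟩ : ∃ D, D = (1 - q) ^ 2 + 2 * q * (1 - Real.cos θ) := ⟨_, rfl⟩
  rw [← hDe] at hD hns ⊢
  have hD' : D ≠ 0 := hD.ne'
  have h3 : (z * (1 - z)⁻¹).re = (q * Real.cos θ - q ^ 2) / D := by
    rw [Complex.mul_re, Complex.inv_re, Complex.inv_im, hns]
    simp only [Complex.sub_re, Complex.one_re, Complex.sub_im, Complex.one_im, hre, him]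
    field_simp
    linear_combination (-q) * hcs
  rw [h3]
  have h1q : 1 - q ≠ 0 := by linarith
  field_simp
  rw [hDe]
  ring

lemma S_lower (d θ δ : ℝ) (hd : 0 < d) (hd1 : d ≤ 1) (hδ : 0 ≤ δ) (hδd : δ ≤ d) (h1 : δ ≤ |θ|)
    (h2 : |θ| ≤ Real.pi) : δ ^ 2 / (60 * d ^ 3) ≤ ∑' j, uT d θ j := by
  rw [uT_tsum d θ hd]
  have hc := Real.cos_le_one_sub_mul_cos_sq h2
  set q := Real.exp (-d) with hq
  have hq0 : 0 < q := Real.exp_pos _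
  have hq1 : q < 1 := exp_lt_one' d hd
  have hqd : 1 - q ≤ d := by have := Real.add_one_le_exp (-d); linarith
  have hq3 : 1 / 3 ≤ q := by
    have h3 : Real.exp (-1) ≤ q := Real.exp_le_exp.2 (by linarith)
    have h4 := Real.exp_one_lt_d9
    rw [Real.exp_neg] at h3
    refine le_trans ?_ h3
    rw [one_div]
    gcongr
    linarith
  set u := 1 - Real.cos θ with hu
  have hpi : Real.pi ^ 2 ≤ 10 := by
    have h3 := Real.pi_lt_d2
    have := Real.pi_pos
    nlinarith
  have hpi0 := Real.pi_pos
  have hu1 : δ ^ 2 / 5 ≤ u := by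
    have h5 : δ ^ 2 ≤ θ ^ 2 := by rw [← sq_abs θ]; gcongr
    have h6 : 1 / 5 ≤ 2 / Real.pi ^ 2 := by
      rw [div_le_div_iff₀ (by norm_num) (by positivity)]; linarith
    have h7 : 1 / 5 * δ ^ 2 ≤ 2 / Real.pi ^ 2 * θ ^ 2 := by gcongr
    linarith
  have hu0 : 0 ≤ u := le_trans (by positivity) hu1
  have h1q : 0 < 1 - q := by linarith
  have hDle : (1 - q) * ((1 - q) ^ 2 + 2 * q * u) ≤ d * (d ^ 2 + 2 * u) := by
    have : 2 * q * u ≤ 2 * u := by nlinarith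
    gcongr
  have hstep : 1 / 3 * u / (d * (d ^ 2 + 2 * u)) ≤
      q * (1 + q) * u / ((1 - q) * ((1 - q) ^ 2 + 2 * q * u)) := by
    have : 1 / 3 ≤ q * (1 + q) := by nlinarith
    gcongr
  refine le_trans ?_ hstep
  rw [div_le_div_iff₀ (by positivity) (by positivity)]
  -- δ²·d(d²+2u) ≤ (u/3)·60 d³ = 20 u d³
  have k1 : δ ^ 2 ≤ d ^ 2 := by gcongr
  have k2 : δ ^ 2 * d ^ 2 ≤ 5 * u * d ^ 2 := by gcongr; linarith
  have k3 : δ ^ 2 * (2 * u) ≤ d ^ 2 * (2 * u) := by gcongr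
  have k4 : 0 ≤ u * d ^ 2 := by positivity
  have k5 : δ ^ 2 * (d ^ 2 + 2 * u) ≤ 20 * (u * d ^ 2) := by nlinarith
  calc _ = d * (δ ^ 2 * (d ^ 2 + 2 * u)) := by ring
    _ ≤ d * (20 * (u * d ^ 2)) := by gcongr
    _ = _ := by ring

lemma FC_norm_le (m : ℕ) (d θ : ℝ) (hd : 0 < d) (hd1 : d ≤ 1) :
    ‖FC m (Complex.exp (-(d : ℂ) + θ * Complex.I))‖ ≤
      (m.factorial * 2 ^ m * 4) * (1 / d) ^ (m + 2) := by
  set z := Complex.exp (-(d : ℂ) + θ * Complex.I) with hz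
  have hq1 := exp_lt_one' d hd
  have h1q : d / 2 ≤ 1 - Real.exp (-d) := by
    have h := Real.add_one_le_exp d
    have h2 : Real.exp (-d) * Real.exp d = 1 := by rw [← Real.exp_add]; simp
    have h3 := Real.exp_pos (-d)
    nlinarith
  have h1q0 : 0 < 1 - Real.exp (-d) := by linarith
  set C : ℝ := m.factorial * (2 / d) ^ m * (2 / d) with hC
  have hsum := (geo_hasSum (d / 2) (by positivity)).mul_left C
  have hb : ∀ j : ℕ, ‖((j : ℂ) + 1) ^ m * z ^ (j + 1) / (1 - z ^ (j + 1))‖ ≤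
      C * Real.exp (-(((j : ℝ) + 1) * (d / 2))) := by
    intro j
    have hnz : ‖z ^ (j + 1)‖ = Real.exp (-(((j : ℝ) + 1) * d)) := by rw [hz, z_pow]
    have h1 : d / 2 ≤ ‖1 - z ^ (j + 1)‖ := by
      have h2 := norm_sub_norm_le (1 : ℂ) (z ^ (j + 1))
      rw [norm_one, hnz] at h2
      refine le_trans ?_ h2
      have : Real.exp (-(((j : ℝ) + 1) * d)) ≤ Real.exp (-d) := by
        apply Real.exp_le_exp.2
        have : (0 : ℝ) ≤ j := Nat.cast_nonneg j
        nlinarith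
      linarith
    have hj : ‖(j : ℂ) + 1‖ = (j : ℝ) + 1 := by
      have := Complex.norm_natCast (j + 1)
      push_cast at this; exact this
    rw [norm_div, norm_mul, norm_pow, hnz, hj]
    set y := ((j : ℝ) + 1) * (d / 2) with hy
    have hy0 : 0 ≤ y := by positivity
    have hp := Real.pow_div_factorial_le_exp y hy0 m
    rw [div_le_iff₀ (by positivity)] at hp
    have e1 : ((j : ℝ) + 1) ^ m = y ^ m * (2 / d) ^ m := by
      rw [← mul_pow, hy]; congr 1; field_simp
    have e2 : Real.exp (-(((j : ℝ) + 1) * d)) = Real.exp (-y) * Real.exp (-y) := by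
      rw [← Real.exp_add, hy]; congr 1; ring
    have e3 : Real.exp y * Real.exp (-y) = 1 := by rw [← Real.exp_add]; simp
    rw [e1, e2]
    calc _ ≤ (Real.exp y * m.factorial) * (2 / d) ^ m * (Real.exp (-y) * Real.exp (-y)) / (d / 2) := by
          gcongr
      _ = (Real.exp y * Real.exp (-y)) * (C * Real.exp (-y)) := by rw [hC]; field_simp
      _ = _ := by rw [e3, one_mul]
  have h := tsum_of_norm_bounded hsum hb
  have hC0 : 0 ≤ C := by positivity
  calc _ ≤ _ := h
    _ ≤ C * (1 / (d / 2)) := by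
        exact mul_le_mul_of_nonneg_left (geo_le _ (by positivity)) hC0
    _ = _ := by rw [hC, div_pow, pow_add, div_pow]; field_simp; norm_num

lemma eta_lower (n : ℕ) (hn : 3 ≤ n) (d : ℝ) (hd : 0 < d) (h : aFun d = n) :
    d ≤ 1 ∧ 0 ≤ d ^ ((4 : ℝ) / 3) / Real.log n ∧ d ^ ((4 : ℝ) / 3) / Real.log n ≤ d ∧
    (n : ℝ) ^ ((1 : ℝ) / 6) / (480 * Real.log n ^ 2) ≤
      (d ^ ((4 : ℝ) / 3) / Real.log n) ^ 2 / (60 * d ^ 3) / 4 := by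
  have hnr : (3 : ℝ) ≤ n := by exact_mod_cast hn
  have hlog : 1 ≤ Real.log n := by
    rw [Real.le_log_iff_exp_le (by linarith)]
    have := Real.exp_one_lt_d9
    linarith
  have hlog0 : 0 < Real.log n := by linarith
  have hle := aFun_le d hd
  rw [h, le_div_iff₀ (by positivity)] at hle
  have hd1 : d ≤ 1 := by
    by_contra hcon
    push Not at hcon
    nlinarith
  have hpow : d ^ ((4 : ℝ) / 3) ≤ d := by
    calc d ^ ((4 : ℝ) / 3) ≤ d ^ (1 : ℝ) :=
          Real.rpow_le_rpow_of_exponent_ge hd hd1 (by norm_num)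
      _ = d := Real.rpow_one d
  refine ⟨hd1, by positivity, (div_le_self (by positivity) hlog).trans hpow, ?_⟩
  have e1 : (d ^ ((4 : ℝ) / 3)) ^ 2 = d ^ 3 * d ^ (-(1 : ℝ) / 3) := by
    rw [← Real.rpow_natCast, ← Real.rpow_natCast, ← Real.rpow_mul hd.le, ← Real.rpow_add hd]
    norm_num
  have e2 : (n : ℝ) ^ ((1 : ℝ) / 6) ≤ 2 * d ^ (-(1 : ℝ) / 3) := by
    have k1 : (n : ℝ) ≤ 2 * d ^ (-(2 : ℝ)) := by
      rw [Real.rpow_neg hd.le, Real.rpow_ofNat, ← div_eq_mul_inv, le_div_iff₀ (by positivity)]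
      exact hle
    calc (n : ℝ) ^ ((1 : ℝ) / 6) ≤ (2 * d ^ (-(2 : ℝ))) ^ ((1 : ℝ) / 6) := by gcongr
      _ = 2 ^ ((1 : ℝ) / 6) * d ^ (-(1 : ℝ) / 3) := by
          rw [Real.mul_rpow (by norm_num) (by positivity), ← Real.rpow_mul hd.le]
          norm_num
      _ ≤ 2 ^ (1 : ℝ) * d ^ (-(1 : ℝ) / 3) := by
          gcongr
          · norm_num
          · norm_num
      _ = _ := by rw [Real.rpow_one]
  have e3 : (d ^ ((4 : ℝ) / 3) / Real.log n) ^ 2 / (60 * d ^ 3) / 4 =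
      2 * d ^ (-(1 : ℝ) / 3) / (480 * Real.log n ^ 2) := by
    rw [div_pow, e1]; field_simp; norm_num
  rw [e3]
  gcongr

lemma J_le (m n : ℕ) (hn : 3 ≤ n) (d : ℝ) (hd : 0 < d) (h : aFun d = n) :
    ‖((Real.exp (n * d) / (2 * Real.pi) : ℝ) : ℂ) *
          ∫ θ in {θ : ℝ | d ^ ((4 : ℝ) / 3) / Real.log n ≤ |θ| ∧ |θ| ≤ Real.pi},
            gC (Complex.exp (-(d : ℂ) + θ * Complex.I)) *
              FC m (Complex.exp (-(d : ℂ) + θ * Complex.I)) *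
              Complex.exp (-(θ * n) * Complex.I)‖ ≤
      Real.exp (2 * (Real.pi / Real.sqrt 6) * Real.sqrt n) *
        (Real.exp (-((n : ℝ) ^ ((1 : ℝ) / 6) / (480 * Real.log n ^ 2))) *
          ((m.factorial * 2 ^ m * 4) * ((n : ℝ) + 1) ^ (m + 2))) := by
  obtain ⟨hd1, hδ0, hδd, heta⟩ := eta_lower n hn d hd h
  set δ := d ^ ((4 : ℝ) / 3) / Real.log n with hδ
  set η := (n : ℝ) ^ ((1 : ℝ) / 6) / (480 * Real.log n ^ 2) with hη
  set Lp := ∑' j, phi d j with hL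
  have hpi := Real.pi_pos
  have hdn : 1 / d ≤ (n : ℝ) + 1 := by
    have h1 := d_ge d hd n h
    rw [div_le_iff₀ (by positivity)] at h1
    rw [div_le_iff₀ hd]; linarith
  set Q : ℝ := (m.factorial * 2 ^ m * 4) * ((n : ℝ) + 1) ^ (m + 2) with hQ
  set S : Set ℝ := {θ : ℝ | δ ≤ |θ| ∧ |θ| ≤ Real.pi} with hS
  have hsub : S ⊆ Set.Icc (-Real.pi) Real.pi := fun θ hθ => abs_le.1 hθ.2
  have hfin : MeasureTheory.volume S < ⊤ :=
    (MeasureTheory.measure_mono hsub).trans_lt measure_Icc_lt_top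
  have hvol : MeasureTheory.volume.real S ≤ 2 * Real.pi := by
    have h1 : MeasureTheory.volume.real S ≤ MeasureTheory.volume.real (Set.Icc (-Real.pi) Real.pi) :=
      MeasureTheory.measureReal_mono hsub measure_Icc_lt_top.ne
    rw [Real.volume_real_Icc_of_le (by linarith)] at h1
    linarith
  have hbound : ∀ θ ∈ S, ‖gC (Complex.exp (-(d : ℂ) + θ * Complex.I)) *
              FC m (Complex.exp (-(d : ℂ) + θ * Complex.I)) *
              Complex.exp (-(θ * n) * Complex.I)‖ ≤ Real.exp (Lp - η) * Q := by
    intro θ hθ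
    have h1 := gC_norm_le d θ hd
    have h2 := FC_norm_le m d θ hd hd1
    have h3 := S_lower d θ δ hd hd1 hδ0 hδd hθ.1 hθ.2
    have h4 : ‖Complex.exp (-(θ * n) * Complex.I)‖ = 1 := by
      rw [Complex.norm_exp]; simp
    rw [norm_mul, norm_mul, h4, mul_one]
    have h5 : ‖gC (Complex.exp (-(d : ℂ) + θ * Complex.I))‖ ≤ Real.exp (Lp - η) := by
      refine h1.trans (Real.exp_le_exp.2 ?_)
      linarith
    have h6 : ‖FC m (Complex.exp (-(d : ℂ) + θ * Complex.I))‖ ≤ Q := by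
      refine h2.trans ?_
      rw [hQ]
      gcongr
    gcongr
  have hI := MeasureTheory.norm_setIntegral_le_of_norm_le_const hfin hbound
  rw [norm_mul, Complex.norm_real, Real.norm_eq_abs, abs_of_pos (by positivity)]
  have hsad := saddle_le d hd n (by omega) h
  have hQ0 : 0 ≤ Q := by positivity
  calc _ ≤ Real.exp (n * d) / (2 * Real.pi) * (Real.exp (Lp - η) * Q * (2 * Real.pi)) := by
        gcongr
        refine hI.trans ?_
        gcongr
    _ = Real.exp (n * d + Lp) * (Real.exp (-η) * Q) := by
        rw [sub_eq_add_neg, Real.exp_add, Real.exp_add]; field_simp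
    _ ≤ _ := by gcongr

/-- **The tail integral is negligible** (formula (30) of the paper): for fixed `m ≥ 1`,
with `d_n` solving `Σ_{j≥1} j·e^{−jd}/(1 − e^{−jd}) = n` and `δ_n = d_n^{4/3}/log n`,
`J₂(m,n) = (e^{n d_n}/(2π))·∫_{δ_n ≤ |θ| ≤ π} g(e^{−d_n+iθ})·F_m(e^{−d_n+iθ})·e^{−iθn} dθ`
satisfies `J₂(m,n) = o(p(n)·n^{(m+1)/2})` as `n → ∞`. -/
theorem tail_integral_negligible (m : ℕ) (hm : 1 ≤ m) (d : ℕ → ℝ)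
    (hd : ∀ n : ℕ, 0 < n → 0 < d n ∧ aFun (d n) = n) :
    (fun n : ℕ =>
        ((Real.exp (n * d n) / (2 * Real.pi) : ℝ) : ℂ) *
          ∫ θ in {θ : ℝ | d n ^ ((4 : ℝ) / 3) / Real.log n ≤ |θ| ∧ |θ| ≤ Real.pi},
            gC (Complex.exp (-(d n : ℂ) + θ * Complex.I)) *
              FC m (Complex.exp (-(d n : ℂ) + θ * Complex.I)) *
              Complex.exp (-(θ * n) * Complex.I))
      =o[atTop]
        (fun n : ℕ =>
          (Fintype.card (Nat.Partition n) : ℝ) * (n : ℝ) ^ (((m : ℝ) + 1) / 2)) := by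
  obtain ⟨K, A, hA, hP⟩ := partition_lower
  rw [isLittleO_iff]
  intro ε hε
  set R : ℕ := m + 2 + K with hR
  set C : ℝ := (m.factorial * 2 ^ m * 4) * 2 ^ (m + 2) with hC
  have hC0 : 0 < C := by positivity
  have hlog : ∀ᶠ n : ℕ in atTop, ‖Real.log n ^ (3 : ℝ)‖ ≤
      1 / (480 * ((R : ℝ) + 1)) * ‖(n : ℝ) ^ ((1 : ℝ) / 6)‖ :=
    tendsto_natCast_atTop_atTop.eventually
      ((isLittleO_log_rpow_rpow_atTop (3 : ℝ) (show (0 : ℝ) < 1 / 6 by norm_num)).bound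
        (show (0 : ℝ) < 1 / (480 * ((R : ℝ) + 1)) by positivity))
  have hbig : ∀ᶠ n : ℕ in atTop, C / (A * ε) ≤ n :=
    tendsto_natCast_atTop_atTop.eventually (eventually_ge_atTop _)
  filter_upwards [hlog, hbig, eventually_ge_atTop 3] with n h1 h2 hn
  obtain ⟨hd, had⟩ := hd n (by omega)
  refine (J_le m n hn (d n) hd had).trans ?_
  have hnr : (3 : ℝ) ≤ n := by exact_mod_cast hn
  have hn0 : (0 : ℝ) < n := by linarith
  have hlog0 : 0 < Real.log n := Real.log_pos (by linarith)
  rw [Real.rpow_ofNat, Real.norm_of_nonneg (by positivity), Real.norm_of_nonneg (by positivity)] at h1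
  have heta : ((R : ℝ) + 1) * Real.log n ≤ (n : ℝ) ^ ((1 : ℝ) / 6) / (480 * Real.log n ^ 2) := by
    rw [le_div_iff₀ (by positivity)]
    rw [one_div, inv_mul_eq_div, le_div_iff₀ (by positivity)] at h1
    nlinarith
  have hexp : Real.exp (-((n : ℝ) ^ ((1 : ℝ) / 6) / (480 * Real.log n ^ 2))) ≤
      1 / (n : ℝ) ^ (R + 1) := by
    have e1 : (1 : ℝ) / (n : ℝ) ^ (R + 1) = Real.exp (-(((R : ℝ) + 1) * Real.log n)) := by
      rw [Real.exp_neg, one_div]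
      congr 1
      have := Real.exp_nat_mul (Real.log n) (R + 1)
      rw [Real.exp_log hn0] at this
      rw [← this]; push_cast; rfl
    rw [e1]
    apply Real.exp_le_exp.2; linarith
  have hPn := hP n
  unfold fR at hPn
  set X := Real.exp (2 * (Real.pi / Real.sqrt 6) * Real.sqrt n) with hX
  have hX0 : 0 < X := Real.exp_pos _
  have hr1 : (1 : ℝ) ≤ (n : ℝ) ^ (((m : ℝ) + 1) / 2) :=
    Real.one_le_rpow (by linarith) (by positivity)
  rw [Real.norm_of_nonneg (by positivity)]
  have hcard : (0 : ℝ) ≤ Fintype.card (Nat.Partition n) := by positivity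
  calc X * (Real.exp (-((n : ℝ) ^ ((1 : ℝ) / 6) / (480 * Real.log n ^ 2))) *
          ((m.factorial * 2 ^ m * 4) * ((n : ℝ) + 1) ^ (m + 2)))
      ≤ X * (1 / (n : ℝ) ^ (R + 1) * ((m.factorial * 2 ^ m * 4) * (2 * (n : ℝ)) ^ (m + 2))) := by
        gcongr
        linarith
    _ = C / n * (X / (n : ℝ) ^ K) := by
        rw [hC, hR, mul_pow]
        field_simp
        ring
    _ ≤ (ε * A) * (X / (n : ℝ) ^ K) := by
        gcongr
        rw [div_le_iff₀ hn0]
        rw [div_le_iff₀ (by positivity)] at h2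
        linarith
    _ = ε * (A * (X / (n : ℝ) ^ K)) := by ring
    _ ≤ ε * (Fintype.card (Nat.Partition n) * 1) := by rw [mul_one]; gcongr
    _ ≤ _ := by gcongr
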